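/- For all x, y ∈ V: Σ_{i∈ℤ/5} [ s(x, e+eᵢ)·s(y, e+eᵢ) + s(x, eᵢ+e_{i+1})·s(y, eᵢ+e_{i+1}) + s(x, e_{i−1}−e_{i+1})·s(y, e_{i−1}−e_{i+1}) ] = 4·s(x,y) + 2·s(Xx, y). (That is, the variation tensor Σ_{δ∈Δ_∞/±} δ⊗δ of the monodromy around the singular member of the Wiman–Edge pencil consisting of ten lines equals (4+2X) applied to the inverse form of s.) -/

import Mathlib

/-!
Pairing with a vector `δ = e + eᵢ`, `eᵢ + eⱼ` or `eᵢ - eⱼ` just adds or subtracts two coordinates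
(`sform_eV_add_ee`, `sform_ee_add_ee`, `sform_ee_sub_ee`), so both sides are explicit bilinear forms
in the six coordinates of `x` and `y`. Their Gram matrices agree: both have diagonal entries `5`,
entry `1` at `(e, eᵢ)` and at `(eᵢ, eᵢ₊₁)`, and entry `-1` at `(eᵢ, eᵢ₊₂)`.
-/

/-- Index type for the basis `e, e₀, …, e₄` of `V`: `none ↦ e`, `some i ↦ eᵢ`. -/
abbrev J5 := Option (ZMod 5)

/-- The 6-dimensional `ℚ`-vector space `V` with basis indexed by `J5`. -/
abbrev V := J5 → ℚ

/-- The basis vector of `V` with index `j`. -/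
def bvec : J5 → V := fun j => Pi.single j 1

/-- The basis vector `e`. -/
def eV : V := Pi.single none 1

/-- The basis vectors `eᵢ`, `i ∈ ℤ/5`. -/
def ee (i : ZMod 5) : V := Pi.single (some i) 1

/-- The symmetric bilinear form on `V` for which the basis `e, e₀, …, e₄` is orthonormal. -/
def sform (x y : V) : ℚ := ∑ j : J5, x j * y j

/-- `ε = ½(e + e₀ + e₁ + e₂ + e₃ + e₄)`. -/
def eps : V := (1 / 2 : ℚ) • (eV + ∑ i : ZMod 5, ee i)

/-- The `ℚ`-linear map `X : V → V` determined by `X(e) = ε` and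
`X(eᵢ) = ε − e_{i+2} − e_{i−2}` (indices mod 5); in coordinates,
`(X x)(j) = (Σ_t x_t)/2`, minus `x_{k−2} + x_{k+2}` when `j = some k`. -/
def Xmap : V →ₗ[ℚ] V where
  toFun x := fun j =>
    (∑ t : J5, x t) / 2 +
      (match j with
        | none => 0
        | some k => -(x (some (k - 2))) - x (some (k + 2)))
  map_add' x y := by
    funext j
    rcases j with _ | k <;> simp [Finset.sum_add_distrib] <;> ring
  map_smul' c x := by
    funext j
    have hs : (∑ i : ZMod 5, c * x (some i)) = c * ∑ i : ZMod 5, x (some i) :=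
      (Finset.mul_sum _ _ _).symm
    rcases j with _ | k <;> simp <;> rw [hs] <;> ring

theorem sform_eV_add_ee (x : V) (i : ZMod 5) :
    sform x (eV + ee i) = x none + x (some i) := by
  simp [sform, eV, ee, mul_add, Finset.sum_add_distrib, Pi.single_apply]

theorem sform_ee_add_ee (x : V) (i j : ZMod 5) :
    sform x (ee i + ee j) = x (some i) + x (some j) := by
  simp [sform, ee, mul_add, Finset.sum_add_distrib, Pi.single_apply]

theorem sform_ee_sub_ee (x : V) (i j : ZMod 5) :
    sform x (ee i - ee j) = x (some i) - x (some j) := by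
  simp [sform, ee, mul_sub, Finset.sum_sub_distrib, Pi.single_apply]

theorem sum_zmod_five (f : ZMod 5 → ℚ) :
    ∑ i, f i = f 0 + f 1 + f 2 + f 3 + f 4 :=
  Fin.sum_univ_five f

/-- The variation tensor of the singular member of the Wiman–Edge pencil consisting of
ten lines: `Σ_{δ ∈ Δ_∞/±} s(x,δ)·s(y,δ) = 4·s(x,y) + 2·s(Xx,y)`, i.e. the tensor
`Σ_{δ∈Δ_∞/±} δ⊗δ` equals `(4+2X)` applied to the inverse form of `s`. -/
theorem variation_tensor_ten_lines (x y : V) :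
    (∑ i : ZMod 5,
        (sform x (eV + ee i) * sform y (eV + ee i) +
          sform x (ee i + ee (i + 1)) * sform y (ee i + ee (i + 1)) +
          sform x (ee (i - 1) - ee (i + 1)) * sform y (ee (i - 1) - ee (i + 1))))
      = 4 * sform x y + 2 * sform (Xmap x) y := by
  -- The shifted indices that occur once both sums are expanded, reduced mod 5.
  have shifts : (1 + 1 : ZMod 5) = 2 ∧ (2 + 1 : ZMod 5) = 3 ∧ (3 + 1 : ZMod 5) = 4 ∧
      (4 + 1 : ZMod 5) = 0 ∧ (0 - 1 : ZMod 5) = 4 ∧ (2 - 1 : ZMod 5) = 1 ∧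
      (3 - 1 : ZMod 5) = 2 ∧ (4 - 1 : ZMod 5) = 3 ∧ (0 - 2 : ZMod 5) = 3 ∧
      (1 - 2 : ZMod 5) = 4 ∧ (3 - 2 : ZMod 5) = 1 ∧ (4 - 2 : ZMod 5) = 2 ∧
      (1 + 2 : ZMod 5) = 3 ∧ (2 + 2 : ZMod 5) = 4 ∧ (3 + 2 : ZMod 5) = 0 ∧
      (4 + 2 : ZMod 5) = 1 := by decide
  obtain ⟨h1, h2, h3, h4, h5, h6, h7, h8, h9, h10, h11, h12, h13, h14, h15, h16⟩ := shifts
  simp only [sform_eV_add_ee, sform_ee_add_ee, sform_ee_sub_ee]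
  simp only [sform, Xmap, LinearMap.coe_mk, AddHom.coe_mk, Fintype.sum_option, sum_zmod_five,
    zero_add, sub_self, h1, h2, h3, h4, h5, h6, h7, h8, h9, h10, h11, h12, h13, h14, h15, h16]
  ring
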